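/- Let k be a field, A a Hopf algebra over k with antipode S, and let R ∈ A ⊗ A be an invertible element satisfying the quasitriangularity axioms: (Δ ⊗ id)(R) = R¹³ R²³, (id ⊗ Δ)(R) = R¹³ R¹², and R · Δ(x) = Δ^{op}(x) · R for all x ∈ A. Write R = Σᵢ aᵢ ⊗ bᵢ and define the Drinfeld element U := Σᵢ S(bᵢ) aᵢ ∈ A (i.e. U = m((S ⊗ id)(σ(R))), where σ is the flip and m the multiplication). Then U is invertible and U x U⁻¹ = S²(x) for all x ∈ A. -/

import Mathlib

/- STATEMENT 7: Drinfeld's quantum Casimir theorem: for a quasitriangular structure R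
on a Hopf algebra A, the Drinfeld element U = m((S ⊗ id)(σ(R))) is invertible and
U x U⁻¹ = S²(x) for all x ∈ A. -/

noncomputable section

open TensorProduct

/-- `R¹²` : image of `R ∈ A ⊗ A` in `A ⊗ (A ⊗ A)`, `a ⊗ b ↦ a ⊗ (b ⊗ 1)`. -/
def R12 {k A : Type*} [CommRing k] [Ring A] [Algebra k A] (R : A ⊗[k] A) :
    A ⊗[k] (A ⊗[k] A) :=
  Algebra.TensorProduct.map (AlgHom.id k A)
    (Algebra.TensorProduct.includeLeft : A →ₐ[k] A ⊗[k] A) R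

/-- `R¹³` : image of `R ∈ A ⊗ A` in `A ⊗ (A ⊗ A)`, `a ⊗ b ↦ a ⊗ (1 ⊗ b)`. -/
def R13 {k A : Type*} [CommRing k] [Ring A] [Algebra k A] (R : A ⊗[k] A) :
    A ⊗[k] (A ⊗[k] A) :=
  Algebra.TensorProduct.map (AlgHom.id k A)
    (Algebra.TensorProduct.includeRight : A →ₐ[k] A ⊗[k] A) R

/-- `R²³` : image of `R ∈ A ⊗ A` in `A ⊗ (A ⊗ A)`, `a ⊗ b ↦ 1 ⊗ (a ⊗ b)`. -/
def R23 {k A : Type*} [CommRing k] [Ring A] [Algebra k A] (R : A ⊗[k] A) :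
    A ⊗[k] (A ⊗[k] A) :=
  (Algebra.TensorProduct.includeRight : (A ⊗[k] A) →ₐ[k] A ⊗[k] (A ⊗[k] A)) R

/-- The Drinfeld element `U = m((S ⊗ id)(σ(R)))`, i.e. `U = Σᵢ S(bᵢ) aᵢ` if
`R = Σᵢ aᵢ ⊗ bᵢ`. -/
def drinfeldElement {k A : Type*} [Field k] [Ring A] [HopfAlgebra k A]
    (R : A ⊗[k] A) : A :=
  (LinearMap.mul' k A)
    ((TensorProduct.map (HopfAlgebra.antipode (R := k)) LinearMap.id)
      ((TensorProduct.comm k A A) R))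

/-!
The algebra `A ⊗ A` acts on `A` from the right by `w ◁ (p ⊗ q) = S(q) w p`, and `U = 1 ◁ R`. The
intertwining axiom gives `U ◁ Δ(x) = 1 ◁ (Δ^{op}(x) R) = ε(x) U`. In the convolution algebra
`Hom(A, A^{op})` this says that `x ↦ U x` times `S` is `x ↦ ε(x) U`; since `S` has convolution
inverse `S²` there, `U x = S²(x) U`.

For the invertibility, the two coproduct axioms make `f ↦ (f ⊗ id)(R)` and `f ↦ (id ⊗ f)(R⁻¹)`
multiplicative for the convolution product, so that `(S ⊗ id)(R) = R⁻¹` and `(id ⊗ S)(R⁻¹) = R`, and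
hence `(S ⊗ S)(R) = R`. With `V = Σᵢ bᵢ S²(aᵢ)` and `U x = S²(x) U`, both `U V` and `V U` are equal
to `Σᵢ bᵢ U aᵢ = Σᵢ S(bᵢ) U S(aᵢ) = U ◁ R⁻¹ = 1`.
-/

open HopfAlgebra WithConv Coalgebra

section Sandwich

variable {k A : Type*} [CommSemiring k] [Semiring A] [Algebra k A]

/-- The linear map sending `p ⊗ q` to the endomorphism `w ↦ q * w * p`. Precomposed with `id ⊗ S` it
is the right action of `A ⊗ A` on `A` that produces the Drinfeld element. The tensor factors are
swapped so that the Drinfeld element of `R` is obtained from `R` itself rather than from `σ(R)`. -/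
def sandwich : A ⊗[k] A →ₗ[k] Module.End k A :=
  (AlgHom.mulLeftRight k A).toLinearMap ∘ₗ
    (MulOpposite.opLinearEquiv k).toLinearMap.lTensor A ∘ₗ (TensorProduct.comm k A A).toLinearMap

@[simp]
lemma sandwich_tmul (p q w : A) : sandwich (p ⊗ₜ[k] q) w = q * w * p := by
  simp [sandwich]

lemma sandwich_lTensor_one (f : A →ₗ[k] A) (t : A ⊗[k] A) :
    sandwich (f.lTensor A t) 1 = LinearMap.mul' k A (f.rTensor A (TensorProduct.comm k A A t)) := by
  induction t with
  | zero => simp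
  | add s t hs ht => simp only [map_add, LinearMap.add_apply, hs, ht]
  | tmul p q => simp

lemma mul_sandwich_one {φ : A →ₗ[k] A} {w : A} (hw : ∀ x, w * x = φ x * w) (t : A ⊗[k] A) :
    w * sandwich t 1 = sandwich (φ.lTensor A t) w := by
  induction t with
  | zero => simp
  | add s t hs ht => simp only [map_add, LinearMap.add_apply, mul_add, hs, ht]
  | tmul p q =>
    rw [LinearMap.lTensor_tmul, sandwich_tmul, sandwich_tmul, mul_one, ← mul_assoc, hw]

lemma sandwich_one_mul {φ : A →ₗ[k] A} {w : A} (hw : ∀ x, w * x = φ x * w) (t : A ⊗[k] A) :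
    sandwich (φ.rTensor A t) 1 * w = sandwich t w := by
  induction t with
  | zero => simp
  | add s t hs ht => simp only [map_add, LinearMap.add_apply, add_mul, hs, ht]
  | tmul p q => simp [mul_assoc, hw]

end Sandwich

section Intertwining

variable {k A : Type*} [CommSemiring k] [Semiring A] [HopfAlgebra k A]

lemma sandwich_lTensor_antipode_mul (s t : A ⊗[k] A) :
    sandwich ((antipode k).lTensor A (s * t)) =
      sandwich ((antipode k).lTensor A t) * sandwich ((antipode k).lTensor A s) := by
  induction s with
  | zero => simp
  | add s s' hs hs' => simp only [add_mul, map_add, mul_add, hs, hs']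
  | tmul p q =>
    induction t with
    | zero => simp
    | add t t' ht ht' => simp only [add_mul, map_add, mul_add, ht, ht']
    | tmul p' q' => ext w; simp [antipode_mul_antidistrib, mul_assoc]

lemma sandwich_lTensor_antipode_comm_comul (x : A) :
    sandwich ((antipode k).lTensor A (TensorProduct.comm k A A (comul (R := k) x))) 1 =
      counit (R := k) x • (1 : A) := by
  rw [sandwich_lTensor_one, TensorProduct.comm_comm, mul_antipode_rTensor_comul_apply,
    Algebra.algebraMap_eq_smul_one]

lemma sandwich_lTensor_antipode_comul {R : A ⊗[k] A} {x : A}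
    (hR : R * comul (R := k) x = TensorProduct.comm k A A (comul (R := k) x) * R) :
    sandwich ((antipode k).lTensor A (comul (R := k) x))
        (sandwich ((antipode k).lTensor A R) 1) =
      counit (R := k) x • sandwich ((antipode k).lTensor A R) 1 := by
  rw [← Module.End.mul_apply, ← sandwich_lTensor_antipode_mul, hR, sandwich_lTensor_antipode_mul,
    Module.End.mul_apply, sandwich_lTensor_antipode_comm_comul, map_smul]

/-- The product of `A^{op}` turns this into `Σ S²(x₂) S(x₁) = S(Σ x₁ S(x₂)) = ε(x)`. -/
lemma antipodeOp_convMul_antipodeOp_comp_antipode :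
    toConv (antipodeAlgHomOp k A).toLinearMap *
      toConv ((antipodeAlgHomOp k A).toLinearMap ∘ₗ antipode k) = 1 := by
  have h := LinearMap.algHom_comp_convMul_distrib (antipodeAlgHomOp k A)
    (toConv LinearMap.id) (toConv (antipode k))
  rw [LinearMap.id_mul_antipode] at h
  ext x
  simpa using congr($h x).symm

lemma counit_smulRight_convMul {C B : Type*} [AddCommMonoid C] [Module k C] [Coalgebra k C]
    [Semiring B] [Algebra k B] (b : B) (g : C →ₗ[k] B) :
    toConv ((counit (R := k)).smulRight b) * toConv g =
      toConv (LinearMap.mulLeft k b ∘ₗ g) := by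
  ext c
  rw [(ℛ k c).convMul_apply]
  simpa [Finset.mul_sum] using congr(b * g $(sum_counit_smul (ℛ k c)))

lemma mul_eq_antipode_antipode_mul {w : A}
    (hw : ∀ x : A, sandwich ((antipode k).lTensor A (comul (R := k) x)) w =
      counit (R := k) x • w) (x : A) :
    w * x = antipode k (antipode k x) * w := by
  let S : A →ₗ[k] Aᵐᵒᵖ := (antipodeAlgHomOp k A).toLinearMap
  let wMul : A →ₗ[k] Aᵐᵒᵖ := (MulOpposite.opLinearEquiv k).toLinearMap ∘ₗ LinearMap.mulLeft k w
  have wMul_conv : toConv wMul * toConv S =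
      toConv ((counit (R := k)).smulRight (MulOpposite.op w)) := by
    ext y
    have h := hw y
    rw [← (ℛ k y).eq] at h
    rw [(ℛ k y).convMul_apply]
    apply MulOpposite.unop_injective
    simpa [wMul, S, mul_assoc] using h
  have wMul_eq : toConv wMul =
      toConv (LinearMap.mulLeft k (MulOpposite.op w) ∘ₗ S ∘ₗ antipode k) := by
    rw [← mul_one (toConv wMul), ← antipodeOp_convMul_antipodeOp_comp_antipode, ← mul_assoc,
      wMul_conv, counit_smulRight_convMul]
  simpa [wMul, S] using congr(($wMul_eq x).unop)

end Intertwining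

section Convolution

variable {k A B : Type*} [CommRing k] [Ring A] [Algebra k A] [Semiring B] [Algebra k B]

lemma rTensor_mul'_R13_mul_R23 (f g : A →ₗ[k] B) (P Q : A ⊗[k] A) :
    (LinearMap.mul' k B ∘ₗ TensorProduct.map f g).rTensor A
        ((TensorProduct.assoc k A A A).symm (R13 P * R23 Q)) =
      f.rTensor A P * g.rTensor A Q := by
  induction P with
  | zero => simp [R13]
  | add P P' hP hP' => simp only [R13, map_add, add_mul] at hP hP' ⊢; rw [hP, hP']
  | tmul a b =>
    induction Q with
    | zero => simp [R23]
    | add Q Q' hQ hQ' => simp only [R23, map_add, mul_add] at hQ hQ' ⊢; rw [hQ, hQ']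
    | tmul c d => simp [R13, R23]

lemma lTensor_mul'_R12_mul_R13 (f g : A →ₗ[k] B) (P Q : A ⊗[k] A) :
    (LinearMap.mul' k B ∘ₗ TensorProduct.map f g).lTensor A (R12 P * R13 Q) =
      f.lTensor A P * g.lTensor A Q := by
  induction P with
  | zero => simp [R12]
  | add P P' hP hP' => simp only [R12, map_add, add_mul] at hP hP' ⊢; rw [hP, hP']
  | tmul a b =>
    induction Q with
    | zero => simp [R13]
    | add Q Q' hQ hQ' => simp only [R13, map_add, mul_add] at hQ hQ' ⊢; rw [hQ, hQ']
    | tmul c d => simp [R12, R13]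

lemma rTensor_convMul [CoalgebraStruct k A] {R : A ⊗[k] A}
    (hR : TensorProduct.assoc k A A A ((comul (R := k)).rTensor A R) = R13 R * R23 R)
    (f g : WithConv (A →ₗ[k] B)) :
    (f * g).ofConv.rTensor A R = f.ofConv.rTensor A R * g.ofConv.rTensor A R := by
  rw [← rTensor_mul'_R13_mul_R23, ← hR, LinearEquiv.symm_apply_apply,
    ← LinearMap.rTensor_comp_apply]
  rfl

lemma lTensor_convMul [CoalgebraStruct k A] {Q : A ⊗[k] A}
    (hQ : (comul (R := k)).lTensor A Q = R12 Q * R13 Q) (f g : WithConv (A →ₗ[k] B)) :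
    (f * g).ofConv.lTensor A Q = f.ofConv.lTensor A Q * g.ofConv.lTensor A Q := by
  rw [← lTensor_mul'_R12_mul_R13, ← hQ, ← LinearMap.lTensor_comp_apply]
  rfl

end Convolution

section Antipode

lemma lTensor_comul_inv {k A : Type*} [CommRing k] [Ring A] [Bialgebra k A] {R : (A ⊗[k] A)ˣ}
    (hR : (comul (R := k)).lTensor A (R : A ⊗[k] A) =
      R13 (R : A ⊗[k] A) * R12 (R : A ⊗[k] A)) :
    (comul (R := k)).lTensor A (↑R⁻¹ : A ⊗[k] A) =
      R12 (↑R⁻¹ : A ⊗[k] A) * R13 (↑R⁻¹ : A ⊗[k] A) := by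
  let Δ₂₃ : A ⊗[k] A →ₐ[k] A ⊗[k] (A ⊗[k] A) :=
    Algebra.TensorProduct.map (AlgHom.id k A) (Bialgebra.comulAlgHom k A)
  let ι₁₂ : A ⊗[k] A →ₐ[k] A ⊗[k] (A ⊗[k] A) :=
    Algebra.TensorProduct.map (AlgHom.id k A) Algebra.TensorProduct.includeLeft
  let ι₁₃ : A ⊗[k] A →ₐ[k] A ⊗[k] (A ⊗[k] A) :=
    Algebra.TensorProduct.map (AlgHom.id k A) Algebra.TensorProduct.includeRight
  have map_eq : Units.map Δ₂₃.toMonoidHom R =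
      Units.map ι₁₃.toMonoidHom R * Units.map ι₁₂.toMonoidHom R := Units.ext hR
  have map_inv_eq : Units.map Δ₂₃.toMonoidHom R⁻¹ =
      Units.map ι₁₂.toMonoidHom R⁻¹ * Units.map ι₁₃.toMonoidHom R⁻¹ := by
    simp only [map_inv, map_eq, mul_inv_rev]
  exact congr(($map_inv_eq).val)

lemma map_antipode_eq_inv {k A M : Type*} [CommSemiring k] [Semiring A] [HopfAlgebra k A] [Monoid M]
    (φ : WithConv (A →ₗ[k] A) →ₙ* M) {u : Mˣ} (hu : φ (toConv LinearMap.id) = u) :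
    φ (toConv (antipode k)) = ↑u⁻¹ := by
  have hφ : φ 1 = 1 := by rw [← u.mul_left_inj, ← hu, ← map_mul, one_mul, one_mul]
  apply Units.eq_inv_of_mul_eq_one_left
  rw [← hu, ← map_mul, LinearMap.id_mul_antipode, hφ]

variable {k A : Type*} [CommRing k] [Ring A] [HopfAlgebra k A]

lemma rTensor_antipode_eq_inv {R : (A ⊗[k] A)ˣ}
    (hR : TensorProduct.assoc k A A A ((comul (R := k)).rTensor A (R : A ⊗[k] A)) =
      R13 (R : A ⊗[k] A) * R23 (R : A ⊗[k] A)) :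
    (antipode k).rTensor A (R : A ⊗[k] A) = ↑R⁻¹ :=
  map_antipode_eq_inv ⟨fun f ↦ f.ofConv.rTensor A (R : A ⊗[k] A), rTensor_convMul hR⟩ (by simp)

lemma lTensor_antipode_eq_inv {Q : (A ⊗[k] A)ˣ}
    (hQ : (comul (R := k)).lTensor A (Q : A ⊗[k] A) =
      R12 (Q : A ⊗[k] A) * R13 (Q : A ⊗[k] A)) :
    (antipode k).lTensor A (Q : A ⊗[k] A) = ↑Q⁻¹ :=
  map_antipode_eq_inv ⟨fun f ↦ f.ofConv.lTensor A (Q : A ⊗[k] A), lTensor_convMul hQ⟩ (by simp)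

lemma map_antipode_antipode_eq_self {R : (A ⊗[k] A)ˣ}
    (h₁ : TensorProduct.assoc k A A A ((comul (R := k)).rTensor A (R : A ⊗[k] A)) =
      R13 (R : A ⊗[k] A) * R23 (R : A ⊗[k] A))
    (h₂ : (comul (R := k)).lTensor A (R : A ⊗[k] A) =
      R13 (R : A ⊗[k] A) * R12 (R : A ⊗[k] A)) :
    TensorProduct.map (antipode k) (antipode k) (R : A ⊗[k] A) = R := by
  rw [← LinearMap.lTensor_comp_rTensor, LinearMap.comp_apply, rTensor_antipode_eq_inv h₁,
    lTensor_antipode_eq_inv (lTensor_comul_inv h₂), inv_inv]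

lemma sandwich_sandwich_lTensor_antipode_one {R : (A ⊗[k] A)ˣ}
    (h₁ : TensorProduct.assoc k A A A ((comul (R := k)).rTensor A (R : A ⊗[k] A)) =
      R13 (R : A ⊗[k] A) * R23 (R : A ⊗[k] A))
    (h₂ : (comul (R := k)).lTensor A (R : A ⊗[k] A) =
      R13 (R : A ⊗[k] A) * R12 (R : A ⊗[k] A)) :
    sandwich (R : A ⊗[k] A) (sandwich ((antipode k).lTensor A (R : A ⊗[k] A)) 1) = 1 := by
  nth_rw 1 [← map_antipode_antipode_eq_self h₁ h₂]
  rw [← LinearMap.lTensor_comp_rTensor, LinearMap.comp_apply, rTensor_antipode_eq_inv h₁,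
    ← Module.End.mul_apply, ← sandwich_lTensor_antipode_mul, R.mul_inv,
    Algebra.TensorProduct.one_def]
  simp

end Antipode

theorem drinfeld_quantum_casimir_general
    {k A : Type*} [CommRing k] [Ring A] [HopfAlgebra k A]
    (R : A ⊗[k] A) (hR : IsUnit R)
    (hax1 : TensorProduct.assoc k A A A ((comul (R := k)).rTensor A R) = R13 R * R23 R)
    (hax2 : (comul (R := k)).lTensor A R = R13 R * R12 R)
    (hax3 : ∀ x : A, R * comul (R := k) x = TensorProduct.comm k A A (comul (R := k) x) * R) :
    ∃ U : Aˣ,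
      (U : A) = LinearMap.mul' k A ((antipode k).rTensor A (TensorProduct.comm k A A R)) ∧
        ∀ x : A, U * x * ↑U⁻¹ = antipode k (antipode k x) := by
  obtain ⟨R, rfl⟩ := hR
  let U := sandwich ((antipode k).lTensor A (R : A ⊗[k] A)) 1
  let V := sandwich ((antipode k ∘ₗ antipode k).rTensor A (R : A ⊗[k] A)) 1
  have hSR := map_antipode_antipode_eq_self hax1 hax2
  have hUx : ∀ x, U * x = (antipode k ∘ₗ antipode k) x * U :=
    mul_eq_antipode_antipode_mul fun x ↦ sandwich_lTensor_antipode_comul (hax3 x)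
  have hRU : sandwich (R : A ⊗[k] A) U = 1 := sandwich_sandwich_lTensor_antipode_one hax1 hax2
  have hVU : V * U = 1 := by rw [sandwich_one_mul hUx, hRU]
  have hUV : U * V = 1 := by
    rw [mul_sandwich_one hUx, ← LinearMap.comp_apply (LinearMap.lTensor A _),
      LinearMap.lTensor_comp_rTensor, TensorProduct.map_comp, LinearMap.comp_apply, hSR, hSR, hRU]
  refine ⟨⟨U, V, hUV, hVU⟩, sandwich_lTensor_one _ _, fun x ↦ ?_⟩
  change U * x * V = _
  rw [hUx, mul_assoc, hUV, mul_one, LinearMap.comp_apply]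

theorem drinfeld_quantum_casimir
    {k A : Type*} [Field k] [Ring A] [HopfAlgebra k A]
    (R : A ⊗[k] A) (hR : IsUnit R)
    (hax1 : (TensorProduct.assoc k A A A).toLinearMap
        ((TensorProduct.map (Coalgebra.comul (R := k)) LinearMap.id) R) = R13 R * R23 R)
    (hax2 : (TensorProduct.map LinearMap.id (Coalgebra.comul (R := k))) R = R13 R * R12 R)
    (hax3 : ∀ x : A, R * Coalgebra.comul (R := k) x =
        (TensorProduct.comm k A A).toLinearMap (Coalgebra.comul (R := k) x) * R) :
    ∃ Uinv : A,
      drinfeldElement R * Uinv = 1 ∧ Uinv * drinfeldElement R = 1 ∧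
        ∀ x : A, drinfeldElement R * x * Uinv =
          HopfAlgebra.antipode (R := k) (HopfAlgebra.antipode (R := k) x) := by
  obtain ⟨U, hU, hconj⟩ := drinfeld_quantum_casimir_general R hR hax1 hax2 hax3
  change ↑U = drinfeldElement R at hU
  exact ⟨↑U⁻¹, hU ▸ U.mul_inv, hU ▸ U.inv_mul, hU ▸ hconj⟩
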